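/- Define t(θ) = (2·sin(3π/10)·cos(π/10)·cos θ)/(2·cos² θ + sin(3π/5) − cos(3π/5) − 1). Then for every real θ with 0 ≤ θ ≤ π/20, one has t(θ) ≥ t(0) = sin(π/5)/(cos(π/5) − sin(π/5) + sin(2π/5) − cos(2π/5)); moreover t is monotonically increasing on this interval. -/

import Mathlib

/-!
Write `a = sin (3π/5) - cos (3π/5) - 1`, so that `t θ = K c / (2 c² + a)` with `c = cos θ` and
`K ≥ 0`. For `c₂ ≤ c₁` the cross-multiplied difference is `(c₁ - c₂) (2 c₁ c₂ - a)`. Since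
`0 ≤ a ≤ 1` and `cos ≥ 1/√2` on `[0, π/20]`, it is nonnegative, and `t` is monotone there because
`cos` is antitone.

The value at `0` reduces, with `C = cos (π/5)` and `S = sin (π/5)`, to
`2 S C / (S + C) = S / (C - S + 2 S C - 2 C² + 1)`, which follows from `4 C² = 2 C + 1`.
-/

open Real Set

noncomputable def t (θ : ℝ) : ℝ :=
  2 * sin (3 * π / 10) * cos (π / 10) * cos θ /
    (2 * cos θ ^ 2 + sin (3 * π / 5) - cos (3 * π / 5) - 1)

theorem sin_three_pi_div_five : sin (3 * π / 5) = sin (2 * π / 5) := by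
  rw [← sin_pi_sub]; congr 1; ring

theorem cos_three_pi_div_five : cos (3 * π / 5) = -cos (2 * π / 5) := by
  rw [← cos_pi_sub]; congr 1; ring

theorem sin_three_pi_div_ten : sin (3 * π / 10) = cos (π / 5) := by
  rw [← cos_pi_div_two_sub]; congr 1; ring

theorem cos_pi_div_ten : cos (π / 10) = sin (2 * π / 5) := by
  rw [← cos_pi_div_two_sub]; congr 1; ring

theorem t_zero_eq :
    t 0 = sin (π / 5) / (cos (π / 5) - sin (π / 5) + sin (2 * π / 5) - cos (2 * π / 5)) := by
  have hπ := pi_pos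
  have hS : 0 < sin (π / 5) := sin_pos_of_pos_of_lt_pi (by linarith) (by linarith)
  have hC : 0 < cos (π / 5) := cos_pos_of_mem_Ioo ⟨by linarith, by linarith⟩
  have hCC : 4 * cos (π / 5) ^ 2 = 2 * cos (π / 5) + 1 := by
    rw [cos_pi_div_five]
    nlinarith [Real.sq_sqrt (show (0 : ℝ) ≤ 5 by norm_num)]
  have e : 2 * π / 5 = 2 * (π / 5) := by ring
  rw [t, sin_three_pi_div_five, cos_three_pi_div_five, sin_three_pi_div_ten, cos_pi_div_ten,
    cos_zero, e, sin_two_mul, cos_two_mul]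
  generalize sin (π / 5) = S at *
  generalize cos (π / 5) = C at *
  -- Reducing modulo `4 C² = 2 C + 1` also shows that the right-hand denominator is positive.
  have key : 2 * C * (C - S + 2 * S * C - (2 * C ^ 2 - 1)) = S + C := by
    linear_combination (S - C) * hCC
  have hD : 0 < C - S + 2 * S * C - (2 * C ^ 2 - 1) := by
    by_contra! h
    nlinarith
  have hN : 0 < 2 * (1 : ℝ) ^ 2 + 2 * S * C - -(2 * C ^ 2 - 1) - 1 := by
    nlinarith [mul_pos hS hC, sq_nonneg C]
  rw [div_eq_div_iff hN.ne' hD.ne']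
  linear_combination 2 * S * C * key

theorem t_monotoneOn : MonotoneOn t (Icc (0 : ℝ) (π / 20)) := by
  have hπ := pi_pos
  have hs : 0 < sin (2 * π / 5) := sin_pos_of_pos_of_lt_pi (by linarith) (by linarith)
  have hc : 0 < cos (2 * π / 5) := cos_pos_of_mem_Ioo ⟨by linarith, by linarith⟩
  have hC : 0 < cos (π / 5) := cos_pos_of_mem_Ioo ⟨by linarith, by linarith⟩
  have hs1 := sin_le_one (2 * π / 5)
  have hc1 := cos_le_one (2 * π / 5)
  have hsc := sin_sq_add_cos_sq (2 * π / 5)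
  have hcos : ∀ θ ∈ Icc (0 : ℝ) (π / 20), √2 / 2 ≤ cos θ := by
    intro θ hθ
    rw [← cos_pi_div_four]
    exact cos_le_cos_of_nonneg_of_le_pi hθ.1 (by linarith) (by linarith [hθ.2])
  intro x hx y hy hxy
  have hxy' : cos y ≤ cos x :=
    cos_le_cos_of_nonneg_of_le_pi hx.1 (by linarith [hy.2]) hxy
  have hy' := hcos y hy
  have h2 : (√2 / 2) ^ 2 = (1 / 2 : ℝ) := by
    rw [div_pow, Real.sq_sqrt (by norm_num)]; norm_num
  have h2p : 0 < √2 / 2 := by positivity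
  rw [t, t, sin_three_pi_div_five, cos_three_pi_div_five, sin_three_pi_div_ten, cos_pi_div_ten]
  generalize sin (2 * π / 5) = s at *
  generalize cos (2 * π / 5) = c at *
  generalize cos (π / 5) = C at *
  generalize cos x = u at *
  generalize cos y = v at *
  generalize √2 / 2 = r at *
  have ha : 1 ≤ s + c := by nlinarith
  have hv : 1 / 2 ≤ v ^ 2 := by nlinarith
  have huv : 1 / 2 ≤ u * v := by nlinarith
  have hu : 1 / 2 ≤ u ^ 2 := by nlinarith
  rw [div_le_div_iff₀ (by linarith) (by linarith)]
  have hK : 0 ≤ 2 * C * s := by positivity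
  have hmain : 0 ≤ (u - v) * (2 * (u * v) - (s + c - 1)) :=
    mul_nonneg (by linarith) (by linarith)
  linarith [mul_nonneg hK hmain]

/-- On `[0, π/20]` the function `t` is monotonically increasing,
`t(0) = sin(π/5)/(cos(π/5) − sin(π/5) + sin(2π/5) − cos(2π/5))`, and `t(θ) ≥ t(0)`
throughout. -/
theorem t_ge_t_zero :
    t 0 = sin (π / 5) / (cos (π / 5) - sin (π / 5) + sin (2 * π / 5) - cos (2 * π / 5)) ∧
    (∀ θ ∈ Icc (0 : ℝ) (π / 20), t 0 ≤ t θ) ∧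
    MonotoneOn t (Icc (0 : ℝ) (π / 20)) :=
  ⟨t_zero_eq,
    fun _ hθ => t_monotoneOn (left_mem_Icc.2 (by positivity)) hθ hθ.1,
    t_monotoneOn⟩
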